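/- arXiv:1704.01817 — 2 statements merged into one kernel-verified Lean document; each statement's English description precedes it below -/
import Mathlib

section
/- Triple product formula (Proposition 1.3, formula (Rfgh)): Let n ≥ 1 and let 𝐩 ∈ ℝ[x₁,…,xₙ]. Let W(𝐩) be the linear span of all partial derivatives ∂^α𝐩 for multi-indices α ∈ ℕⁿ (including α = 0), let ρ = dim W(𝐩), and let 𝐩₁,…,𝐩_ρ be a basis of W(𝐩) orthonormal with respect to the Fischer inner product. For 1 ≤ i,j,k ≤ ρ set a_{ijk} := Σ_{ℓ=1}^{ρ} (𝐩, 𝐩ᵢ·𝐩_ℓ)_F · (𝐩_ℓ, 𝐩ⱼ·𝐩ₖ)_F. Then for all smooth functions f, g, h : ℝⁿ → ℝ one has 𝐩(∂)(f·g·h) = Σ_{i=1}^{ρ} Σ_{j=1}^{ρ} Σ_{k=1}^{ρ} a_{ijk} · (𝐩ᵢ(∂)f)·(𝐩ⱼ(∂)g)·(𝐩ₖ(∂)h) pointwise on ℝⁿ. -/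
noncomputable section

open MvPolynomial

/-- Partial derivative of a function on `ℝⁿ` in the `i`-th coordinate direction. -/
def pderivFun {n : ℕ} (i : Fin n) (f : (Fin n → ℝ) → ℝ) : (Fin n → ℝ) → ℝ :=
  fun x => fderiv ℝ f x (Pi.single i 1)

/-- `∂^m`, the iterated partial derivative attached to the multi-index `m`. -/
def multiDerivFun {n : ℕ} (m : Fin n →₀ ℕ) (f : (Fin n → ℝ) → ℝ) : (Fin n → ℝ) → ℝ :=
  List.foldr (fun i g => (pderivFun i)^[m i] g) f (List.finRange n)

/-- `p(∂)`, the constant-coefficient differential operator attached to the polynomial `p`. -/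
def polDeriv {n : ℕ} (p : MvPolynomial (Fin n) ℝ) (f : (Fin n → ℝ) → ℝ) : (Fin n → ℝ) → ℝ :=
  fun x => ∑ m ∈ p.support, p.coeff m * multiDerivFun m f x

/-- `∂^m` acting on polynomials. -/
def polyMultiDeriv {n : ℕ} (m : Fin n →₀ ℕ) (p : MvPolynomial (Fin n) ℝ) :
    MvPolynomial (Fin n) ℝ :=
  List.foldr (fun i q => (fun r => MvPolynomial.pderiv i r)^[m i] q) p (List.finRange n)

/-- `q(∂)p`, as a polynomial. -/
def polyApply {n : ℕ} (q p : MvPolynomial (Fin n) ℝ) : MvPolynomial (Fin n) ℝ :=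
  ∑ m ∈ q.support, q.coeff m • polyMultiDeriv m p

/-- The Fischer inner product `(p,q)_F = (p(∂)q)(0)`. -/
def fischer {n : ℕ} (p q : MvPolynomial (Fin n) ℝ) : ℝ :=
  polDeriv p (fun x => MvPolynomial.eval x q) 0

/-- `W(p)`, the linear span of all partial derivatives `∂^α p` (including `p` itself). -/
def Wspace {n : ℕ} (p : MvPolynomial (Fin n) ℝ) : Submodule ℝ (MvPolynomial (Fin n) ℝ) :=
  Submodule.span ℝ (Set.range fun m : Fin n →₀ ℕ => polyMultiDeriv m p)

/-!
For smooth functions `f`, `g` and a point `x`, the functional `q ↦ (q(∂)(f g))(x)` is the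
convolution of the jets `q ↦ (q(∂)f)(x)` and `q ↦ (q(∂)g)(x)` with respect to the coproduct
`Δ q = q(X + Y)`: this is the Leibniz rule in all orders at once. The Taylor coefficients of an
element of `W(p)` lie again in `W(p)`, so on `W(p)` a convolution only depends on the restrictions
of its two factors to `W(p)`. If `b` is an orthonormal basis of `W(p)`, a functional `φ` agrees on
`W(p)` with `∑ i, φ (b i) • (·, b i)`, and `(·, b i)` is the jet at `0` of the polynomial `b i`;
hence `(·, b i) ⋆ (·, b j) = (·, b i * b j)`, which produces the structure constants.
-/

section Taylor

variable {σ R : Type*} [CommSemiring R]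

/-- The Taylor expansion `q(X + Y)` of a polynomial, as a polynomial in `Y` with coefficients in
`R[X]`. In characteristic zero its coefficient at `Y ^ m` is `∂ ^ m q / m!`. -/
def taylorHom : MvPolynomial σ R →ₐ[R] MvPolynomial σ (MvPolynomial σ R) :=
  aeval fun i => C (X i) + X i

lemma taylorHom_X (i : σ) :
    taylorHom (X i : MvPolynomial σ R) = C (X i) + X i :=
  aeval_X _ i

lemma taylorHom_C (r : R) : taylorHom (C r : MvPolynomial σ R) = C (C r) :=
  aeval_C _ r

lemma coeff_zero_taylorHom (q : MvPolynomial σ R) : coeff 0 (taylorHom q) = q := by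
  have h : constantCoeff.comp (taylorHom (σ := σ) (R := R)).toRingHom = RingHom.id _ :=
    ringHom_ext (by simp) (by simp [taylorHom_X])
  exact congr($h q)

lemma pderiv_taylorHom (i : σ) (q : MvPolynomial σ R) :
    pderiv i (taylorHom q) = taylorHom (pderiv i q) := by
  classical
  induction q using MvPolynomial.induction_on with
  | C r => simp
  | add p q hp hq => simp only [map_add, hp, hq]
  | mul_X p j hp =>
    have hX : pderiv i (taylorHom (X j : MvPolynomial σ R)) = taylorHom (pderiv i (X j)) := by
      by_cases hij : j = i <;> simp [taylorHom_X, pderiv_X, hij]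
    rw [map_mul, pderiv_mul, pderiv_mul, hp, hX, map_add, map_mul, map_mul]

/-- A space of polynomials is derivative-closed if it is stable under all `∂/∂xᵢ`; over a field of
characteristic zero this amounts to translation invariance. -/
def DerivativeClosed (W : Submodule R (MvPolynomial σ R)) : Prop :=
  ∀ i, ∀ q ∈ W, pderiv i q ∈ W

lemma multiIndex_induction {motive : (σ →₀ ℕ) → Prop} (zero : motive 0)
    (add_single : ∀ m i, motive m → motive (m + Finsupp.single i 1)) (m : σ →₀ ℕ) : motive m := by
  classical
  obtain ⟨s, rfl⟩ := Multiset.toFinsupp.surjective m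
  induction s using Multiset.induction_on with
  | empty => simpa using zero
  | cons i s ih =>
    rw [← Multiset.singleton_add, map_add, add_comm]
    simpa using add_single _ i ih

lemma coeff_taylorHom_mem {K : Type*} [Field K] [CharZero K] {W : Submodule K (MvPolynomial σ K)}
    (hW : DerivativeClosed W) (m : σ →₀ ℕ) {q : MvPolynomial σ K} (hq : q ∈ W) :
    coeff m (taylorHom q) ∈ W := by
  induction m using multiIndex_induction generalizing q with
  | zero => rwa [coeff_zero_taylorHom]
  | add_single m i ih =>
    have hmem : (m i + 1 : K) • coeff (m + Finsupp.single i 1) (taylorHom q) ∈ W := by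
      convert ih (hW i q hq) using 1
      rw [← pderiv_taylorHom, coeff_pderiv, smul_eq_C_mul, mul_comm]
      simp
    exact (W.smul_mem_iff (Nat.cast_add_one_ne_zero _)).1 hmem

end Taylor

section Convolution

variable {σ R B : Type*} [CommSemiring R] [CommSemiring B] [Algebra R B]

/-- The tensor product `φ ⊗ ψ` of two linear maps on `R[X]`, viewed on `R[X][Y] = R[X] ⊗ R[Y]`. -/
def tensorPairing (φ ψ : MvPolynomial σ R →ₗ[R] B) :
    MvPolynomial σ (MvPolynomial σ R) →ₗ[R] B :=
  Finsupp.lsum R (fun m => LinearMap.mulRight R (ψ (monomial m 1)) ∘ₗ φ) ∘ₗ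
    (AddMonoidAlgebra.coeffLinearEquiv R).toLinearMap

lemma tensorPairing_monomial (φ ψ : MvPolynomial σ R →ₗ[R] B) (m : σ →₀ ℕ)
    (q : MvPolynomial σ R) : tensorPairing φ ψ (monomial m q) = φ q * ψ (monomial m 1) :=
  sum_monomial_eq <| by simp

lemma tensorPairing_apply (φ ψ : MvPolynomial σ R →ₗ[R] B)
    (P : MvPolynomial σ (MvPolynomial σ R)) :
    tensorPairing φ ψ P = ∑ m ∈ P.support, φ (coeff m P) * ψ (monomial m 1) :=
  sum_def

/-- The convolution `φ ⋆ ψ = (φ ⊗ ψ) ∘ Δ` of two linear maps on `R[X]`, where `Δ q = q(X + Y)`. -/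
def convolution (φ ψ : MvPolynomial σ R →ₗ[R] B) : MvPolynomial σ R →ₗ[R] B :=
  tensorPairing φ ψ ∘ₗ taylorHom.toLinearMap

lemma convolution_apply (φ ψ : MvPolynomial σ R →ₗ[R] B) (q : MvPolynomial σ R) :
    convolution φ ψ q =
      ∑ m ∈ (taylorHom q).support, φ (coeff m (taylorHom q)) * ψ (monomial m 1) :=
  tensorPairing_apply φ ψ (taylorHom q)

lemma convolution_C (φ ψ : MvPolynomial σ R →ₗ[R] B) (r : R) :
    convolution φ ψ (C r) = r • (φ 1 * ψ 1) := by
  have h : taylorHom (C r : MvPolynomial σ R) = monomial 0 (C r) := taylorHom_C r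
  rw [convolution, LinearMap.comp_apply, AlgHom.toLinearMap_apply, h, tensorPairing_monomial,
    ← mul_one (C r), ← smul_eq_C_mul, map_smul, smul_mul_assoc]
  rfl

lemma tensorPairing_mul_taylorHom_X (φ ψ : MvPolynomial σ R →ₗ[R] B)
    (P : MvPolynomial σ (MvPolynomial σ R)) (i : σ) :
    tensorPairing φ ψ (P * taylorHom (X i)) = tensorPairing (φ ∘ₗ LinearMap.mulRight R (X i)) ψ P
      + tensorPairing φ (ψ ∘ₗ LinearMap.mulRight R (X i)) P := by
  induction P using MvPolynomial.induction_on' with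
  | monomial m q =>
    rw [taylorHom_X, mul_add, mul_comm _ (C _), C_mul_monomial, mul_comm (X i) q]
    simp [tensorPairing_monomial, X, monomial_mul]
  | add P Q hP hQ => simp only [add_mul, map_add, hP, hQ]; abel

lemma convolution_mul_X (φ ψ : MvPolynomial σ R →ₗ[R] B) (q : MvPolynomial σ R) (i : σ) :
    convolution φ ψ (q * X i) = convolution (φ ∘ₗ LinearMap.mulRight R (X i)) ψ q
      + convolution φ (ψ ∘ₗ LinearMap.mulRight R (X i)) q := by
  simp only [convolution, LinearMap.comp_apply, AlgHom.toLinearMap_apply, map_mul,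
    tensorPairing_mul_taylorHom_X]

lemma convolution_comm (φ ψ : MvPolynomial σ R →ₗ[R] B) : convolution φ ψ = convolution ψ φ := by
  refine LinearMap.ext fun q => ?_
  induction q using MvPolynomial.induction_on generalizing φ ψ with
  | C r => rw [convolution_C, convolution_C, mul_comm]
  | add p q hp hq => rw [map_add, map_add, hp, hq]
  | mul_X q i hq => rw [convolution_mul_X, convolution_mul_X, hq, hq φ, add_comm]

lemma convolution_sum_smul_left {ι : Type*} [Fintype ι] (c : ι → B)
    (φ : ι → MvPolynomial σ R →ₗ[R] B) (ψ : MvPolynomial σ R →ₗ[R] B) :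
    convolution (∑ i, c i • φ i) ψ = ∑ i, c i • convolution (φ i) ψ := by
  refine LinearMap.ext fun q => ?_
  simp only [convolution_apply, LinearMap.sum_apply, LinearMap.smul_apply, smul_eq_mul,
    Finset.sum_mul, Finset.mul_sum, mul_assoc]
  exact Finset.sum_comm

lemma convolution_sum_smul_right {ι : Type*} [Fintype ι] (c : ι → B)
    (φ : MvPolynomial σ R →ₗ[R] B) (ψ : ι → MvPolynomial σ R →ₗ[R] B) :
    convolution φ (∑ i, c i • ψ i) = ∑ i, c i • convolution φ (ψ i) := by
  simp only [convolution_comm φ, convolution_sum_smul_left]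

end Convolution

section DualFamily

lemma sum_smul_eq_of_mem_span_range {R M ι : Type*} [Semiring R] [AddCommMonoid M] [Module R M]
    [Fintype ι] [DecidableEq ι] {b : ι → M} {β : ι → M →ₗ[R] R}
    (hβ : ∀ i j, β i (b j) = if i = j then 1 else 0) {q : M}
    (hq : q ∈ Submodule.span R (Set.range b)) : ∑ i, β i q • b i = q := by
  obtain ⟨c, rfl⟩ := (Submodule.mem_span_range_iff_exists_fun R).1 hq
  simp [hβ]

lemma eqOn_sum_smul_of_le_span_range {R M ι : Type*} [CommSemiring R] [AddCommMonoid M]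
    [Module R M] [Fintype ι] [DecidableEq ι] {b : ι → M} {β : ι → M →ₗ[R] R}
    (hβ : ∀ i j, β i (b j) = if i = j then 1 else 0) {W : Submodule R M}
    (hW : W ≤ Submodule.span R (Set.range b)) (φ : M →ₗ[R] R) :
    Set.EqOn φ (∑ i, φ (b i) • β i : M →ₗ[R] R) W := fun q hq => by
  conv_lhs => rw [← sum_smul_eq_of_mem_span_range hβ (hW hq)]
  simp [mul_comm]

end DualFamily

section DerivativeClosed

variable {σ K B : Type*} [Field K] [CharZero K] {W : Submodule K (MvPolynomial σ K)}

section Congr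

variable [CommSemiring B] [Algebra K B]

lemma convolution_congr_left (hW : DerivativeClosed W)
    {φ φ' : MvPolynomial σ K →ₗ[K] B} (hφ : Set.EqOn φ φ' W) (ψ : MvPolynomial σ K →ₗ[K] B) :
    Set.EqOn (convolution φ ψ) (convolution φ' ψ) W := fun q hq => by
  rw [convolution_apply, convolution_apply]
  exact Finset.sum_congr rfl fun m _ => by rw [hφ (coeff_taylorHom_mem hW m hq)]

lemma convolution_congr (hW : DerivativeClosed W)
    {φ φ' ψ ψ' : MvPolynomial σ K →ₗ[K] B} (hφ : Set.EqOn φ φ' W) (hψ : Set.EqOn ψ ψ' W) :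
    Set.EqOn (convolution φ ψ) (convolution φ' ψ') W := by
  refine (convolution_congr_left hW hφ ψ).trans ?_
  rw [convolution_comm φ' ψ, convolution_comm φ' ψ']
  exact convolution_congr_left hW hψ φ'

end Congr

lemma convolution_eq_sum_mul {ι : Type*} [Fintype ι] [DecidableEq ι]
    (hW : DerivativeClosed W) {b : ι → MvPolynomial σ K}
    {β : ι → MvPolynomial σ K →ₗ[K] K} (hβ : ∀ i j, β i (b j) = if i = j then 1 else 0)
    (hspan : W ≤ Submodule.span K (Set.range b)) (φ ψ : MvPolynomial σ K →ₗ[K] K)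
    {q : MvPolynomial σ K} (hq : q ∈ W) :
    convolution φ ψ q = ∑ i, ∑ j, φ (b i) * ψ (b j) * convolution (β i) (β j) q := by
  rw [convolution_congr hW (eqOn_sum_smul_of_le_span_range hβ hspan φ)
    (eqOn_sum_smul_of_le_span_range hβ hspan ψ) hq, convolution_sum_smul_left]
  simp [convolution_sum_smul_right, Finset.mul_sum, mul_assoc]

lemma convolution_convolution_eq_sum_mul {ι : Type*} [Fintype ι] [DecidableEq ι]
    (hW : DerivativeClosed W) {b : ι → MvPolynomial σ K} {β : ι → MvPolynomial σ K →ₗ[K] K}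
    (hβ : ∀ i j, β i (b j) = if i = j then 1 else 0)
    (hspan : W ≤ Submodule.span K (Set.range b)) (φ ψ χ : MvPolynomial σ K →ₗ[K] K)
    {q : MvPolynomial σ K} (hq : q ∈ W) :
    convolution φ (convolution ψ χ) q =
      ∑ i, ∑ j, ∑ k, (∑ l, convolution (β i) (β l) q * convolution (β j) (β k) (b l)) *
        (φ (b i) * (ψ (b j) * χ (b k))) := by
  let θ : MvPolynomial σ K →ₗ[K] K := ∑ j, ∑ k, (ψ (b j) * χ (b k)) • convolution (β j) (β k)
  have hθ_apply (r : MvPolynomial σ K) :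
      θ r = ∑ j, ∑ k, ψ (b j) * χ (b k) * convolution (β j) (β k) r := by
    simp [θ]
  have hθ : Set.EqOn (convolution ψ χ) θ W := fun r hr => by
    rw [convolution_eq_sum_mul hW hβ hspan ψ χ hr, hθ_apply]
  rw [convolution_congr hW (Set.eqOn_refl φ _) hθ hq, convolution_eq_sum_mul hW hβ hspan φ θ hq]
  refine Finset.sum_congr rfl fun i _ => ?_
  simp only [hθ_apply, Finset.mul_sum, Finset.sum_mul]
  rw [Finset.sum_comm]
  refine Finset.sum_congr rfl fun j _ => ?_
  rw [Finset.sum_comm]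
  refine Finset.sum_congr rfl fun k _ => Finset.sum_congr rfl fun l _ => ?_
  ring

end DerivativeClosed

section CommutingAeval

open scoped IsMulCommutative in
/-- Evaluation of a polynomial at pairwise commuting elements of a possibly noncommutative algebra.
At pairwise commuting derivations `d i` this is the differential operator `p(d)`. -/
def commutingAeval {σ R S : Type*} [CommSemiring R] [Semiring S] [Algebra R S] (d : σ → S)
    (hd : ∀ i j, Commute (d i) (d j)) : MvPolynomial σ R →ₐ[R] S :=
  haveI := Algebra.isMulCommutative_adjoin R (s := Set.range d) <| by
    rintro _ ⟨i, rfl⟩ _ ⟨j, rfl⟩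
    exact hd i j
  (Algebra.adjoin R (Set.range d)).val.comp
    (aeval fun i => ⟨d i, Algebra.subset_adjoin (Set.mem_range_self i)⟩)

lemma commutingAeval_X {σ R S : Type*} [CommSemiring R] [Semiring S] [Algebra R S] {d : σ → S}
    (hd : ∀ i j, Commute (d i) (d j)) (i : σ) : commutingAeval (R := R) d hd (X i) = d i := by
  simp [commutingAeval]

lemma commutingAeval_monomial_one {R S : Type*} [CommSemiring R] [Semiring S] [Algebra R S] {n : ℕ}
    {d : Fin n → S} (hd : ∀ i j, Commute (d i) (d j)) (m : Fin n →₀ ℕ) :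
    commutingAeval d hd (monomial m (1 : R)) = ((List.finRange n).map fun i => d i ^ m i).prod := by
  rw [monomial_eq, C_1, one_mul, Finsupp.prod_fintype _ _ fun i => pow_zero _, Fin.prod_univ_def,
    map_list_prod, List.map_map]
  congr 2
  ext i
  simp [commutingAeval_X]

lemma foldr_iterate_eq_commutingAeval {R M α : Type*} [CommSemiring R] [AddCommMonoid M]
    [Module R M] {n : ℕ} {d : Fin n → Module.End R M} (hd : ∀ i j, Commute (d i) (d j))
    {e : Fin n → α → α} {T : M → α} (hT : ∀ i, Function.Semiconj T (d i) (e i))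
    (m : Fin n →₀ ℕ) (u : M) :
    (List.finRange n).foldr (fun i v => (e i)^[m i] v) (T u) =
      T (commutingAeval d hd (monomial m (1 : R)) u) := by
  rw [commutingAeval_monomial_one]
  induction List.finRange n with
  | nil => rfl
  | cons i l ih =>
    rw [List.foldr_cons, ih, List.map_cons, List.prod_cons, Module.End.mul_apply,
      Module.End.pow_apply, ((hT i).iterate_right (m i)).eq]

end CommutingAeval

section Jet

variable {σ R A B : Type*} [CommSemiring R] [CommSemiring A] [Algebra R A] [CommSemiring B]
  [Algebra R B]

/-- The jet of `a`: the linear map `q ↦ ε (q(D) a)`, for pairwise commuting derivations `D i` of `A`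
and an evaluation homomorphism `ε`. -/
def jet (D : σ → Derivation R A A) (hD : ∀ i j, Commute (D i : Module.End R A) (D j))
    (ε : A →ₐ[R] B) (a : A) : MvPolynomial σ R →ₗ[R] B :=
  ε.toLinearMap ∘ₗ (commutingAeval (fun i => (D i : Module.End R A)) hD).toLinearMap.flip a

variable {D : σ → Derivation R A A} (hD : ∀ i j, Commute (D i : Module.End R A) (D j))
  (ε : A →ₐ[R] B)

lemma jet_apply (a : A) (q : MvPolynomial σ R) :
    jet D hD ε a q = ε (commutingAeval (fun i => (D i : Module.End R A)) hD q a) :=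
  rfl

lemma jet_C (a : A) (r : R) : jet D hD ε a (C r) = r • ε a := by
  simp [jet, ← algebraMap_eq, Module.algebraMap_end_apply]

lemma jet_one (a : A) : jet D hD ε a 1 = ε a := by
  rw [← C_1, jet_C, one_smul]

lemma jet_add (a b : A) : jet D hD ε (a + b) = jet D hD ε a + jet D hD ε b :=
  LinearMap.ext fun q => by simp [jet]

lemma jet_comp_mulRight_X (a : A) (i : σ) :
    jet D hD ε a ∘ₗ LinearMap.mulRight R (X i) = jet D hD ε (D i a) :=
  LinearMap.ext fun q => by simp [jet, commutingAeval_X]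

lemma jet_mul (a b : A) :
    jet D hD ε (a * b) = convolution (jet D hD ε a) (jet D hD ε b) := by
  refine LinearMap.ext fun q => ?_
  induction q using MvPolynomial.induction_on generalizing a b with
  | C r => rw [convolution_C, jet_C, jet_one, jet_one, map_mul]
  | add p q hp hq => rw [map_add, map_add, hp, hq]
  | mul_X q i hq =>
    have hX : jet D hD ε (a * b) (q * X i) = jet D hD ε (D i (a * b)) q :=
      congr($(jet_comp_mulRight_X hD ε (a * b) i) q)
    rw [hX, Derivation.leibniz, jet_add, LinearMap.add_apply, smul_eq_mul, smul_eq_mul, hq,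
      mul_comm b, hq, convolution_mul_X, jet_comp_mulRight_X, jet_comp_mulRight_X, add_comm]

end Jet

section SmoothFunctions

open scoped Manifold ContDiff

variable {E : Type*} [NormedAddCommGroup E] [NormedSpace ℝ E]

lemma fderiv_fderiv_apply_comm {F : Type*} [NormedAddCommGroup F] [NormedSpace ℝ F] {f : E → F}
    {x : E} (hf : ContDiffAt ℝ 2 f x) (v w : E) :
    fderiv ℝ (fun y => fderiv ℝ f y v) x w = fderiv ℝ (fun y => fderiv ℝ f y w) x v := by
  have hdiff : DifferentiableAt ℝ (fderiv ℝ f) x :=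
    (hf.fderiv_right (m := 1) (by norm_num)).differentiableAt (by simp)
  have hsymm : IsSymmSndFDerivAt ℝ f x := hf.isSymmSndFDerivAt (by simp)
  have happly (v w : E) : fderiv ℝ (fun y => fderiv ℝ f y v) x w =
      fderiv ℝ (fderiv ℝ f) x w v := by
    rw [fderiv_clm_apply hdiff (differentiableAt_const v)]
    simp
  rw [happly, happly, hsymm.eq]

lemma differentiableAt_smooth (f : C^∞⟮𝓘(ℝ, E), E; ℝ⟯) (x : E) : DifferentiableAt ℝ f x :=
  f.contMDiff.contDiff.differentiable (by simp) x

/-- The directional derivative along `v`, as a derivation of the algebra of smooth functions. -/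
def smoothDirDeriv (v : E) : Derivation ℝ C^∞⟮𝓘(ℝ, E), E; ℝ⟯ C^∞⟮𝓘(ℝ, E), E; ℝ⟯ :=
  Derivation.mk'
    { toFun f := ⟨fun x => fderiv ℝ f x v,
        ((f.contMDiff.contDiff.fderiv_right (m := ∞) (by simp)).clm_apply contDiff_const).contMDiff⟩
      map_add' f g := by
        ext x
        exact congr($(fderiv_add (differentiableAt_smooth f x) (differentiableAt_smooth g x)) v)
      map_smul' c f := by
        ext x
        exact congr($(fderiv_const_smul (differentiableAt_smooth f x) c) v) }
    fun f g => by
      ext x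
      exact congr($(fderiv_mul (differentiableAt_smooth f x) (differentiableAt_smooth g x)) v)

lemma smoothDirDeriv_commute (v w : E) :
    Commute (smoothDirDeriv v : Module.End ℝ C^∞⟮𝓘(ℝ, E), E; ℝ⟯) (smoothDirDeriv w) := by
  ext f x
  exact fderiv_fderiv_apply_comm (contDiff_infty.1 f.contMDiff.contDiff 2).contDiffAt w v

/-- Evaluation of smooth functions at `x`. -/
def smoothEvalAlgHom (x : E) : C^∞⟮𝓘(ℝ, E), E; ℝ⟯ →ₐ[ℝ] ℝ :=
  (Pi.evalAlgHom ℝ (fun _ : E => ℝ) x).comp ContMDiffMap.coeFnAlgHom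

lemma smoothEvalAlgHom_apply (x : E) (f : C^∞⟮𝓘(ℝ, E), E; ℝ⟯) : smoothEvalAlgHom x f = f x :=
  rfl

variable {n : ℕ}

/-- The partial derivative `∂/∂xᵢ` on smooth functions, lifting `pderivFun i`. -/
def smoothPDeriv (i : Fin n) : Derivation ℝ C^∞⟮𝓘(ℝ, Fin n → ℝ), Fin n → ℝ; ℝ⟯
    C^∞⟮𝓘(ℝ, Fin n → ℝ), Fin n → ℝ; ℝ⟯ :=
  smoothDirDeriv (Pi.single i 1)

lemma smoothPDeriv_commute (i j : Fin n) :
    Commute (smoothPDeriv i).toLinearMap (smoothPDeriv j).toLinearMap :=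
  smoothDirDeriv_commute _ _

/-- The jet of a smooth function on `ℝⁿ` at `x`: the linear map `q ↦ (q(∂)f)(x)`. -/
def jetAt (x : Fin n → ℝ) (f : C^∞⟮𝓘(ℝ, Fin n → ℝ), Fin n → ℝ; ℝ⟯) :
    MvPolynomial (Fin n) ℝ →ₗ[ℝ] ℝ :=
  jet smoothPDeriv smoothPDeriv_commute (smoothEvalAlgHom x) f

lemma jetAt_apply (x : Fin n → ℝ) (f : C^∞⟮𝓘(ℝ, Fin n → ℝ), Fin n → ℝ; ℝ⟯)
    (q : MvPolynomial (Fin n) ℝ) : jetAt x f q = polDeriv q f x := by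
  have hmonomial (m : Fin n →₀ ℕ) : jetAt x f (monomial m 1) = multiDerivFun m f x := by
    rw [multiDerivFun, foldr_iterate_eq_commutingAeval (T := DFunLike.coe) smoothPDeriv_commute
      fun _ _ => rfl, jetAt, jet_apply, smoothEvalAlgHom_apply]
  conv_lhs => rw [q.as_sum, map_sum]
  refine Finset.sum_congr rfl fun m _ => ?_
  have hsmul : monomial m (coeff m q) = coeff m q • monomial m (1 : ℝ) := by
    rw [smul_monomial, smul_eq_mul, mul_one]
  rw [hsmul, map_smul, smul_eq_mul, hmonomial]

/-- The `i`-th coordinate as a smooth function on `ℝⁿ`. -/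
def smoothCoord (i : Fin n) : C^∞⟮𝓘(ℝ, Fin n → ℝ), Fin n → ℝ; ℝ⟯ :=
  ⟨fun y => y i, (contDiff_apply ℝ ℝ i).contMDiff⟩

/-- Polynomials as smooth functions on `ℝⁿ`. -/
def smoothOfPoly : MvPolynomial (Fin n) ℝ →ₐ[ℝ] C^∞⟮𝓘(ℝ, Fin n → ℝ), Fin n → ℝ; ℝ⟯ :=
  aeval smoothCoord

lemma coe_smoothOfPoly (q : MvPolynomial (Fin n) ℝ) :
    ⇑(smoothOfPoly q) = fun y => eval y q := by
  ext y
  have h : (smoothEvalAlgHom y).comp smoothOfPoly = aeval y :=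
    algHom_ext fun i => by
      rw [AlgHom.comp_apply, smoothOfPoly, aeval_X, aeval_X]
      rfl
  exact congr($h q)

lemma jetAt_zero_smoothOfPoly (p q : MvPolynomial (Fin n) ℝ) :
    jetAt 0 (smoothOfPoly q) p = fischer p q := by
  rw [jetAt_apply, coe_smoothOfPoly, fischer]

lemma jetAt_mul (x : Fin n → ℝ) (f g : C^∞⟮𝓘(ℝ, Fin n → ℝ), Fin n → ℝ; ℝ⟯) :
    jetAt x (f * g) = convolution (jetAt x f) (jetAt x g) :=
  jet_mul _ _ f g

lemma fischer_mul_right (p q r : MvPolynomial (Fin n) ℝ) :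
    fischer p (q * r) =
      convolution (jetAt 0 (smoothOfPoly q)) (jetAt 0 (smoothOfPoly r)) p := by
  rw [← jetAt_zero_smoothOfPoly, map_mul, jetAt_mul]

end SmoothFunctions

section Wspace

lemma pderiv_commute {σ R : Type*} [CommRing R] (i j : σ) :
    Commute (pderiv (R := R) i).toLinearMap (pderiv (R := R) j).toLinearMap := by
  have h : ⁅pderiv (R := R) i, pderiv (R := R) j⁆ = 0 := by
    classical
    refine derivation_ext fun k => ?_
    rw [Derivation.commutator_apply, pderiv_X, pderiv_X]
    simp only [Pi.single_apply]
    split_ifs <;> simp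
  exact LinearMap.ext fun q => sub_eq_zero.1 congr($h q)

variable {n : ℕ} (p : MvPolynomial (Fin n) ℝ)

lemma polyMultiDeriv_eq_commutingAeval (m : Fin n →₀ ℕ) :
    polyMultiDeriv m p =
      commutingAeval (fun i => (pderiv (R := ℝ) i).toLinearMap) pderiv_commute
        (monomial m (1 : ℝ)) p :=
  foldr_iterate_eq_commutingAeval (T := id) pderiv_commute (fun _ _ => rfl) m p

lemma derivativeClosed_Wspace : DerivativeClosed (Wspace p) := by
  intro i
  suffices Wspace p ≤ (Wspace p).comap (pderiv i).toLinearMap from this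
  refine Submodule.span_le.2 ?_
  rintro _ ⟨m, rfl⟩
  refine Submodule.subset_span ⟨m + Finsupp.single i 1, ?_⟩
  simp only [polyMultiDeriv_eq_commutingAeval]
  rw [add_comm, monomial_single_add, pow_one, map_mul, commutingAeval_X, Module.End.mul_apply]

lemma self_mem_Wspace : p ∈ Wspace p :=
  Submodule.subset_span ⟨0, by simp [polyMultiDeriv_eq_commutingAeval]⟩

end Wspace

open scoped Manifold ContDiff in
theorem generalized_leibniz_triple_product_general {n : ℕ} {ι : Type*} [Fintype ι] [DecidableEq ι]
    {p : MvPolynomial (Fin n) ℝ} {b : ι → MvPolynomial (Fin n) ℝ}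
    (hspan : Wspace p ≤ Submodule.span ℝ (Set.range b))
    (horth : ∀ i j, fischer (b i) (b j) = if i = j then 1 else 0)
    {f g h : (Fin n → ℝ) → ℝ} (hf : ContDiff ℝ (⊤ : ℕ∞) f) (hg : ContDiff ℝ (⊤ : ℕ∞) g)
    (hh : ContDiff ℝ (⊤ : ℕ∞) h) (x : Fin n → ℝ) :
    polDeriv p (fun y => f y * g y * h y) x =
      ∑ i, ∑ j, ∑ k, (∑ l, fischer p (b i * b l) * fischer (b l) (b j * b k)) *
        (polDeriv (b i) f x * (polDeriv (b j) g x * polDeriv (b k) h x)) := by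
  let F : C^∞⟮𝓘(ℝ, Fin n → ℝ), Fin n → ℝ; ℝ⟯ := ⟨f, hf.contMDiff⟩
  let G : C^∞⟮𝓘(ℝ, Fin n → ℝ), Fin n → ℝ; ℝ⟯ := ⟨g, hg.contMDiff⟩
  let H : C^∞⟮𝓘(ℝ, Fin n → ℝ), Fin n → ℝ; ℝ⟯ := ⟨h, hh.contMDiff⟩
  have hdual (i j : ι) : jetAt 0 (smoothOfPoly (b i)) (b j) = if i = j then 1 else 0 := by
    simp only [jetAt_zero_smoothOfPoly, horth, eq_comm]
  calc polDeriv p (fun y => f y * g y * h y) x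
      = jetAt x (F * G * H) p := (jetAt_apply x (F * G * H) p).symm
    _ = convolution (jetAt x F) (convolution (jetAt x G) (jetAt x H)) p := by
      rw [mul_assoc, jetAt_mul, jetAt_mul]
    _ = _ := convolution_convolution_eq_sum_mul (derivativeClosed_Wspace p) hdual hspan _ _ _
      (self_mem_Wspace p)
    _ = _ := by
      simp only [← fischer_mul_right, jetAt_apply]
      rfl

/-- Triple product formula. -/
theorem generalized_leibniz_triple_product
    (n : ℕ) (hn : 1 ≤ n) (p : MvPolynomial (Fin n) ℝ)
    (ρ : ℕ) (hρ : ρ = Module.finrank ℝ (Wspace p))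
    (b : Fin ρ → MvPolynomial (Fin n) ℝ)
    (hbmem : ∀ j, b j ∈ Wspace p)
    (hbspan : Wspace p ≤ Submodule.span ℝ (Set.range b))
    (hborth : ∀ i j, fischer (b i) (b j) = if i = j then 1 else 0)
    (a : Fin ρ → Fin ρ → Fin ρ → ℝ)
    (ha : ∀ i j k, a i j k = ∑ l : Fin ρ, fischer p (b i * b l) * fischer (b l) (b j * b k))
    (f g h : (Fin n → ℝ) → ℝ)
    (hf : ContDiff ℝ (⊤ : ℕ∞) f) (hg : ContDiff ℝ (⊤ : ℕ∞) g) (hh : ContDiff ℝ (⊤ : ℕ∞) h)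
    (x : Fin n → ℝ) :
    polDeriv p (fun y => f y * g y * h y) x
      = ∑ i : Fin ρ, ∑ j : Fin ρ, ∑ k : Fin ρ,
          a i j k * (polDeriv (b i) f x * (polDeriv (b j) g x * polDeriv (b k) h x)) := by
  simp only [ha]
  exact generalized_leibniz_triple_product_general hbspan hborth hf hg hh x
end
end

section
/- Main identity for V = ℝ^{p,q} with explicit operator D_{s,t} (Theorem 8.2): Let s, t ∈ ℂ and ε, η ∈ {+,−}, and let f be a smooth complex-valued function on ℝⁿ×ℝⁿ. Define (D_{s,t}f)(ξ,ζ) := P(ξ)P(ζ)·(P(∂/∂ξ − ∂/∂ζ)f)(ξ,ζ) + 4s·P(ζ)·Σ_{j=1}^{n} ξⱼ·(∂f/∂ξⱼ − ∂f/∂ζⱼ)(ξ,ζ) + 4t·P(ξ)·Σ_{j=1}^{n} ζⱼ·(∂f/∂ζⱼ − ∂f/∂ξⱼ)(ξ,ζ) + [ 2t(2t−2+n)·P(ξ) − 8st·P(ξ,ζ) + 2s(2s−2+n)·P(ζ) ]·f(ξ,ζ). Then at every point (ξ,ζ) with P(ξ) ≠ 0 and P(ζ) ≠ 0, P(∂/∂ξ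 − ∂/∂ζ)[ P(ξ)^{s,ε} P(ζ)^{t,η} f(ξ,ζ) ] = P(ξ)^{s−1,−ε} P(ζ)^{t−1,−η} · (D_{s,t}f)(ξ,ζ). -/
noncomputable section

/-- `εᵢ`: the sign of the `i`-th coordinate for the quadratic form of signature `(p,q)`. -/
def sgn (p : ℕ) {n : ℕ} (i : Fin n) : ℝ := if (i : ℕ) < p then 1 else -1

/-- The quadratic form `P(x) = x₁²+⋯+x_p² − x_{p+1}²−⋯−x_n²` on `ℝⁿ`, `n = p+q`. -/
def Pform (p : ℕ) {n : ℕ} (x : Fin n → ℝ) : ℝ := ∑ i, sgn p i * x i ^ 2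

/-- The associated symmetric bilinear form `P(x,y) = Σ_{i≤p} xᵢyᵢ − Σ_{i>p} xᵢyᵢ`. -/
def Pbil (p : ℕ) {n : ℕ} (x y : Fin n → ℝ) : ℝ := ∑ i, sgn p i * x i * y i

/-- Signed power `t^{s,ε}`: `t^{s,+} = |t|^s = exp(s·log|t|)` and `t^{s,−} = sign(t)·|t|^s`. -/
def sPow (ε : Bool) (s : ℂ) (t : ℝ) : ℂ :=
  (if ε then 1 else (Real.sign t : ℂ)) * Complex.exp (s * (Real.log |t| : ℂ))

/-- Partial derivative `∂/∂ξᵢ` (first variable) of a function on `ℝⁿ×ℝⁿ`. -/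
def pdx {n : ℕ} (i : Fin n) (f : (Fin n → ℝ) × (Fin n → ℝ) → ℂ) :
    (Fin n → ℝ) × (Fin n → ℝ) → ℂ :=
  fun z => fderiv ℝ f z (Pi.single i 1, 0)

/-- Partial derivative `∂/∂ζᵢ` (second variable) of a function on `ℝⁿ×ℝⁿ`. -/
def pdy {n : ℕ} (i : Fin n) (f : (Fin n → ℝ) × (Fin n → ℝ) → ℂ) :
    (Fin n → ℝ) × (Fin n → ℝ) → ℂ :=
  fun z => fderiv ℝ f z (0, Pi.single i 1)

/-- The operator `∂/∂ξᵢ − ∂/∂ζᵢ`. -/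
def pdiff {n : ℕ} (i : Fin n) (f : (Fin n → ℝ) × (Fin n → ℝ) → ℂ) :
    (Fin n → ℝ) × (Fin n → ℝ) → ℂ :=
  fun z => pdx i f z - pdy i f z

/-- The operator `P(∂/∂ξ − ∂/∂ζ) = Σᵢ εᵢ (∂/∂ξᵢ − ∂/∂ζᵢ)²`. -/
def PopDiff (p : ℕ) {n : ℕ} (f : (Fin n → ℝ) × (Fin n → ℝ) → ℂ) :
    (Fin n → ℝ) × (Fin n → ℝ) → ℂ :=
  fun z => ∑ i, (sgn p i : ℂ) * pdiff i (pdiff i f) z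

/-- The differential operator `D_{s,t}` of Theorem 8.2. -/
def Dst (p : ℕ) {n : ℕ} (s t : ℂ) (f : (Fin n → ℝ) × (Fin n → ℝ) → ℂ) :
    (Fin n → ℝ) × (Fin n → ℝ) → ℂ :=
  fun z =>
    (Pform p z.1 : ℂ) * (Pform p z.2 : ℂ) * PopDiff p f z
    + 4 * s * (Pform p z.2 : ℂ) * ∑ j, (z.1 j : ℂ) * (pdx j f z - pdy j f z)
    + 4 * t * (Pform p z.1 : ℂ) * ∑ j, (z.2 j : ℂ) * (pdy j f z - pdx j f z)
    + (2 * t * (2 * t - 2 + (n : ℂ)) * (Pform p z.1 : ℂ)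
        - 8 * s * t * (Pbil p z.1 z.2 : ℂ)
        + 2 * s * (2 * s - 2 + (n : ℂ)) * (Pform p z.2 : ℂ)) * f z

/-!
Let `Φ = P(ξ)^{s,ε} P(ζ)^{t,η}` and `□ = P(∂/∂ξ − ∂/∂ζ)`. The Leibniz rule splits `□(Φ f)` into
`Φ □f`, the cross term `2 Σᵢ εᵢ (∂ᵢΦ)(∂ᵢf)` and `(□Φ) f`, which become the terms of second, first
and zeroth order of `D_{s,t}` once `P(ξ)^{s-1,-ε} P(ζ)^{t-1,-η}` is factored out. The zeroth-order
coefficient comes from the Bernstein identity `□ P^{s,ε} = 2s(2s−2+n) P^{s-1,-ε}` for each of the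
two factors of `Φ`, together with the pairing of their gradients, which gives `−8st P(ξ,ζ)`.
-/

open Filter Topology

section SignedPower

variable {ε : Bool} {s : ℂ} {x : ℝ}

lemma sPow_not_sub_one_mul_self (ε : Bool) (s : ℂ) (hx : x ≠ 0) :
    sPow (!ε) (s - 1) x * x = sPow ε s x := by
  have exp_mul_abs : Complex.exp ((s - 1) * (Real.log |x| : ℂ)) * (|x| : ℝ)
      = Complex.exp (s * (Real.log |x| : ℂ)) := by
    nth_rewrite 2 [← Real.exp_log (abs_pos.mpr hx)]
    rw [Complex.ofReal_exp, ← Complex.exp_add]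
    ring_nf
  rw [sPow, sPow, ← exp_mul_abs]
  rcases hx.lt_or_gt with hneg | hpos
  · cases ε <;> simp [Real.sign_of_neg hneg, abs_of_neg hneg]
  · cases ε <;> simp [Real.sign_of_pos hpos, abs_of_pos hpos]

lemma sPow_eventuallyEq_const_mul_exp_log (hx : x ≠ 0) :
    sPow ε s =ᶠ[𝓝 x] fun y ↦
      (if ε then 1 else (Real.sign x : ℂ)) * Complex.exp (s * (Real.log y : ℂ)) := by
  rcases hx.lt_or_gt with hneg | hpos
  · filter_upwards [gt_mem_nhds hneg] with y hy
    simp [sPow, Real.sign_of_neg hneg, Real.sign_of_neg hy]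
  · filter_upwards [lt_mem_nhds hpos] with y hy
    simp [sPow, Real.sign_of_pos hpos, Real.sign_of_pos hy]

lemma hasDerivAt_sPow (hx : x ≠ 0) :
    HasDerivAt (sPow ε s) (s * sPow (!ε) (s - 1) x) x := by
  have hlocal := sPow_eventuallyEq_const_mul_exp_log (ε := ε) (s := s) hx
  have hexp := (((Real.hasDerivAt_log hx).ofReal_comp.const_mul s).cexp.const_mul
    (if ε then 1 else (Real.sign x : ℂ))).congr_of_eventuallyEq hlocal
  refine hexp.congr_deriv ?_
  have hxC : (x : ℂ) ≠ 0 := Complex.ofReal_ne_zero.mpr hx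
  rw [← mul_assoc, ← hlocal.eq_of_nhds, ← sPow_not_sub_one_mul_self ε s hx, Complex.ofReal_inv]
  field_simp

lemma deriv_sPow (hx : x ≠ 0) : deriv (sPow ε s) x = s * sPow (!ε) (s - 1) x :=
  (hasDerivAt_sPow hx).deriv

lemma deriv_deriv_sPow (hx : x ≠ 0) :
    deriv (deriv (sPow ε s)) x = s * ((s - 1) * sPow (!!ε) (s - 1 - 1) x) := by
  have hderiv : deriv (sPow ε s) =ᶠ[𝓝 x] fun y ↦ s * sPow (!ε) (s - 1) y := by
    filter_upwards [isOpen_ne.mem_nhds hx] with y hy using deriv_sPow hy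
  rw [hderiv.deriv_eq, ((hasDerivAt_sPow hx).const_mul s).deriv]

lemma contDiffAt_sPow {m : WithTop ℕ∞} (hx : x ≠ 0) : ContDiffAt ℝ m (sPow ε s) x := by
  have hlog : ContDiffAt ℝ m (fun y : ℝ ↦ (Real.log y : ℂ)) x :=
    Complex.ofRealCLM.contDiff.contDiffAt.comp x (Real.contDiffAt_log.mpr hx)
  exact (contDiffAt_const.mul (contDiffAt_const.mul hlog).cexp).congr_of_eventuallyEq
    (sPow_eventuallyEq_const_mul_exp_log hx)

end SignedPower

section Leibniz

variable {n : ℕ} {i : Fin n} {f g : (Fin n → ℝ) × (Fin n → ℝ) → ℂ}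
  {z : (Fin n → ℝ) × (Fin n → ℝ)}

lemma pdiff_eq_fderiv (i : Fin n) (f : (Fin n → ℝ) × (Fin n → ℝ) → ℂ)
    (z : (Fin n → ℝ) × (Fin n → ℝ)) :
    pdiff i f z = fderiv ℝ f z (Pi.single i 1, -Pi.single i 1) := by
  rw [pdiff, pdx, pdy, ← map_sub, Prod.mk_sub_mk, sub_zero, zero_sub]

lemma pdiff_congr (h : f =ᶠ[𝓝 z] g) : pdiff i f z = pdiff i g z := by
  rw [pdiff_eq_fderiv, pdiff_eq_fderiv, h.fderiv_eq]

lemma pdiff_fun_add (hf : DifferentiableAt ℝ f z) (hg : DifferentiableAt ℝ g z) :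
    pdiff i (fun w ↦ f w + g w) z = pdiff i f z + pdiff i g z := by
  simp only [pdiff_eq_fderiv, fderiv_fun_add hf hg, add_apply]

lemma pdiff_fun_mul (hf : DifferentiableAt ℝ f z) (hg : DifferentiableAt ℝ g z) :
    pdiff i (fun w ↦ f w * g w) z = f z * pdiff i g z + pdiff i f z * g z := by
  simp [pdiff_eq_fderiv, fderiv_fun_mul hf hg, mul_comm]

lemma differentiableAt_pdiff (hf : ContDiffAt ℝ 2 f z) : DifferentiableAt ℝ (pdiff i f) z := by
  have hfderiv : DifferentiableAt ℝ (fderiv ℝ f) z :=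
    (hf.fderiv_right (m := 1) (by norm_num)).differentiableAt (by norm_num)
  rw [funext (pdiff_eq_fderiv i f)]
  exact hfderiv.clm_apply (differentiableAt_const _)

lemma pdiff_pdiff_fun_mul (hf : ContDiffAt ℝ 2 f z) (hg : ContDiffAt ℝ 2 g z) :
    pdiff i (pdiff i fun w ↦ f w * g w) z
      = f z * pdiff i (pdiff i g) z + 2 * (pdiff i f z * pdiff i g z)
        + pdiff i (pdiff i f) z * g z := by
  have hfirst : pdiff i (fun w ↦ f w * g w)
      =ᶠ[𝓝 z] fun w ↦ f w * pdiff i g w + pdiff i f w * g w := by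
    filter_upwards [hf.eventually (by simp), hg.eventually (by simp)] with w hfw hgw
    exact pdiff_fun_mul (hfw.differentiableAt (by simp)) (hgw.differentiableAt (by simp))
  have hf₁ : DifferentiableAt ℝ f z := hf.differentiableAt (by simp)
  have hg₁ : DifferentiableAt ℝ g z := hg.differentiableAt (by simp)
  have hf₂ : DifferentiableAt ℝ (pdiff i f) z := differentiableAt_pdiff hf
  have hg₂ : DifferentiableAt ℝ (pdiff i g) z := differentiableAt_pdiff hg
  rw [pdiff_congr hfirst, pdiff_fun_add (hf₁.fun_mul hg₂) (hf₂.fun_mul hg₁),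
    pdiff_fun_mul hf₁ hg₂, pdiff_fun_mul hf₂ hg₁]
  ring

lemma popDiff_fun_mul (p : ℕ) (hf : ContDiffAt ℝ 2 f z) (hg : ContDiffAt ℝ 2 g z) :
    PopDiff p (fun w ↦ f w * g w) z
      = f z * PopDiff p g z + 2 * ∑ i, (sgn p i : ℂ) * (pdiff i f z * pdiff i g z)
        + PopDiff p f z * g z := by
  simp only [PopDiff, pdiff_pdiff_fun_mul hf hg, Finset.mul_sum, Finset.sum_mul,
    ← Finset.sum_add_distrib]
  exact Finset.sum_congr rfl fun i _ ↦ by ring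

end Leibniz

section Swap

variable {n : ℕ}

lemma pdiff_comp_swap (i : Fin n) (f : (Fin n → ℝ) × (Fin n → ℝ) → ℂ)
    (z : (Fin n → ℝ) × (Fin n → ℝ)) :
    pdiff i (fun w ↦ f w.swap) z = -pdiff i f z.swap := by
  have hswap : fderiv ℝ (fun w ↦ f w.swap) z = (fderiv ℝ f z.swap).comp
      (ContinuousLinearEquiv.prodComm ℝ (Fin n → ℝ) (Fin n → ℝ)).toContinuousLinearMap :=
    (ContinuousLinearEquiv.prodComm ℝ (Fin n → ℝ) (Fin n → ℝ)).comp_right_fderiv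
  rw [pdiff_eq_fderiv, pdiff_eq_fderiv, hswap, ← map_neg]
  simp

lemma popDiff_comp_swap (p : ℕ) (f : (Fin n → ℝ) × (Fin n → ℝ) → ℂ)
    (z : (Fin n → ℝ) × (Fin n → ℝ)) :
    PopDiff p (fun w ↦ f w.swap) z = PopDiff p f z.swap := by
  have hsecond (i : Fin n) :
      pdiff i (pdiff i fun w ↦ f w.swap) z = pdiff i (pdiff i f) z.swap := by
    rw [funext (pdiff_comp_swap i f), pdiff_comp_swap i (fun w ↦ -pdiff i f w), pdiff_eq_fderiv,
      fderiv_fun_neg, neg_apply, neg_neg, ← pdiff_eq_fderiv]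
  simp only [PopDiff, hsecond]

end Swap

section CompPform

variable {p n : ℕ} {i : Fin n} {F : ℝ → ℂ} {z : (Fin n → ℝ) × (Fin n → ℝ)}

lemma sgn_mul_self (p : ℕ) (i : Fin n) : (sgn p i : ℂ) * sgn p i = 1 := by
  unfold sgn
  split_ifs <;> simp

lemma contDiff_pform {m : WithTop ℕ∞} : ContDiff ℝ m (Pform p : (Fin n → ℝ) → ℝ) := by
  unfold Pform
  fun_prop

lemma fderiv_pform_single (x : Fin n → ℝ) :
    fderiv ℝ (Pform p) x (Pi.single i 1) = 2 * sgn p i * x i := by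
  have hsum : HasFDerivAt (Pform p) _ x :=
    HasFDerivAt.fun_sum (u := Finset.univ) fun j _ ↦
      ((hasFDerivAt_apply (𝕜 := ℝ) j x).pow 2).const_mul (sgn p j)
  rw [hsum.fderiv]
  simp [Pi.single_apply, ← mul_assoc, mul_comm (sgn p i) 2]

lemma pdiff_comp_pform_fst (hF : DifferentiableAt ℝ F (Pform p z.1)) :
    pdiff i (fun w ↦ F (Pform p w.1)) z = 2 * sgn p i * z.1 i * deriv F (Pform p z.1) := by
  have hP : HasFDerivAt (Pform p) (fderiv ℝ (Pform p) z.1) z.1 :=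
    (contDiff_pform.differentiable one_ne_zero z.1).hasFDerivAt
  have hcomp := hF.hasDerivAt.hasFDerivAt.comp z (hP.comp z hasFDerivAt_fst)
  rw [pdiff_eq_fderiv]
  refine (DFunLike.congr_fun hcomp.fderiv _).trans ?_
  simp [fderiv_pform_single]

lemma pdiff_comp_pform_snd (hF : DifferentiableAt ℝ F (Pform p z.2)) :
    pdiff i (fun w ↦ F (Pform p w.2)) z = -(2 * sgn p i * z.2 i * deriv F (Pform p z.2)) :=
  (pdiff_comp_swap i (fun w ↦ F (Pform p w.1)) z).trans
    (congrArg Neg.neg (pdiff_comp_pform_fst (z := z.swap) hF))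

lemma pdiff_const_mul_fst_apply (c : ℂ) :
    pdiff i (fun w : (Fin n → ℝ) × (Fin n → ℝ) ↦ c * (w.1 i : ℂ)) z = c := by
  have hcoord : HasFDerivAt (fun w : (Fin n → ℝ) × (Fin n → ℝ) ↦ (w.1 i : ℂ)) _ z :=
    Complex.ofRealCLM.hasFDerivAt.comp z ((hasFDerivAt_apply (𝕜 := ℝ) i z.1).comp z hasFDerivAt_fst)
  rw [pdiff_eq_fderiv, (hcoord.const_mul c).fderiv]
  simp

lemma pdiff_pdiff_comp_pform_fst (hF : ContDiffAt ℝ 2 F (Pform p z.1)) :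
    pdiff i (pdiff i fun w ↦ F (Pform p w.1)) z
      = 4 * (z.1 i : ℂ) ^ 2 * deriv (deriv F) (Pform p z.1)
        + 2 * sgn p i * deriv F (Pform p z.1) := by
  have hP : ContDiff ℝ 1 fun w : (Fin n → ℝ) × (Fin n → ℝ) ↦ Pform p w.1 :=
    contDiff_pform.comp contDiff_fst
  have hfirst : pdiff i (fun w ↦ F (Pform p w.1))
      =ᶠ[𝓝 z] fun w ↦ 2 * sgn p i * w.1 i * deriv F (Pform p w.1) := by
    filter_upwards [hP.continuous.continuousAt.eventually (hF.eventually (by simp))] with w hFw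
    exact pdiff_comp_pform_fst (hFw.differentiableAt (by simp))
  have hcoord : DifferentiableAt ℝ
      (fun w : (Fin n → ℝ) × (Fin n → ℝ) ↦ 2 * (sgn p i : ℂ) * w.1 i) z := by
    fun_prop
  have hderiv : DifferentiableAt ℝ (deriv F) (Pform p z.1) :=
    (hF.derivWithin (m := 1) (by norm_num)).differentiableAt one_ne_zero
  have hderivP : DifferentiableAt ℝ (fun w ↦ deriv F (Pform p w.1)) z :=
    hderiv.fun_comp' z (hP.differentiable one_ne_zero z)
  rw [pdiff_congr hfirst, pdiff_fun_mul hcoord hderivP, pdiff_comp_pform_fst hderiv,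
    pdiff_const_mul_fst_apply]
  linear_combination 4 * (z.1 i : ℂ) ^ 2 * deriv (deriv F) (Pform p z.1) * sgn_mul_self p i

lemma popDiff_comp_pform_fst (hF : ContDiffAt ℝ 2 F (Pform p z.1)) :
    PopDiff p (fun w ↦ F (Pform p w.1)) z
      = 4 * Pform p z.1 * deriv (deriv F) (Pform p z.1) + 2 * n * deriv F (Pform p z.1) := by
  have hterm (i : Fin n) : (sgn p i : ℂ) * pdiff i (pdiff i fun w ↦ F (Pform p w.1)) z
      = 4 * deriv (deriv F) (Pform p z.1) * (sgn p i * (z.1 i : ℂ) ^ 2)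
        + 2 * deriv F (Pform p z.1) := by
    rw [pdiff_pdiff_comp_pform_fst hF]
    linear_combination 2 * deriv F (Pform p z.1) * sgn_mul_self p i
  have hP : (Pform p z.1 : ℂ) = ∑ i, (sgn p i : ℂ) * (z.1 i : ℂ) ^ 2 := by
    simp [Pform]
  simp only [PopDiff, hterm, Finset.sum_add_distrib, ← Finset.mul_sum, ← hP, Finset.sum_const,
    Finset.card_univ, Fintype.card_fin, nsmul_eq_mul]
  ring

end CompPform

section PowersOfForms

variable {p n : ℕ} {s t : ℂ} {ε η : Bool} {z : (Fin n → ℝ) × (Fin n → ℝ)}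

lemma popDiff_sPow_pform_fst (hz : Pform p z.1 ≠ 0) :
    PopDiff p (fun w ↦ sPow ε s (Pform p w.1)) z
      = 2 * s * (2 * s - 2 + n) * sPow (!ε) (s - 1) (Pform p z.1) := by
  rw [popDiff_comp_pform_fst (contDiffAt_sPow hz), deriv_deriv_sPow hz, deriv_sPow hz,
    ← sPow_not_sub_one_mul_self (!ε) (s - 1) hz]
  ring

lemma popDiff_sPow_pform_snd (hz : Pform p z.2 ≠ 0) :
    PopDiff p (fun w ↦ sPow ε s (Pform p w.2)) z
      = 2 * s * (2 * s - 2 + n) * sPow (!ε) (s - 1) (Pform p z.2) :=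
  (popDiff_comp_swap p (fun w ↦ sPow ε s (Pform p w.1)) z).trans
    (popDiff_sPow_pform_fst (z := z.swap) hz)

lemma contDiffAt_sPow_pform_fst {m : WithTop ℕ∞} (hz : Pform p z.1 ≠ 0) :
    ContDiffAt ℝ m (fun w : (Fin n → ℝ) × (Fin n → ℝ) ↦ sPow ε s (Pform p w.1)) z :=
  (contDiffAt_sPow hz).comp z (contDiff_pform.comp contDiff_fst).contDiffAt

lemma contDiffAt_sPow_pform_snd {m : WithTop ℕ∞} (hz : Pform p z.2 ≠ 0) :
    ContDiffAt ℝ m (fun w : (Fin n → ℝ) × (Fin n → ℝ) ↦ sPow ε s (Pform p w.2)) z :=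
  (contDiffAt_sPow hz).comp z (contDiff_pform.comp contDiff_snd).contDiffAt

lemma pdiff_sPow_pform_fst (i : Fin n) (hz : Pform p z.1 ≠ 0) :
    pdiff i (fun w ↦ sPow ε s (Pform p w.1)) z
      = 2 * s * sgn p i * z.1 i * sPow (!ε) (s - 1) (Pform p z.1) := by
  rw [pdiff_comp_pform_fst (hasDerivAt_sPow hz).differentiableAt, deriv_sPow hz]
  ring

lemma pdiff_sPow_pform_snd (i : Fin n) (hz : Pform p z.2 ≠ 0) :
    pdiff i (fun w ↦ sPow ε s (Pform p w.2)) z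
      = -(2 * s * sgn p i * z.2 i * sPow (!ε) (s - 1) (Pform p z.2)) := by
  rw [pdiff_comp_pform_snd (hasDerivAt_sPow hz).differentiableAt, deriv_sPow hz]
  ring

lemma pdiff_sPow_mul_sPow (i : Fin n) (hz1 : Pform p z.1 ≠ 0) (hz2 : Pform p z.2 ≠ 0) :
    pdiff i (fun w ↦ sPow ε s (Pform p w.1) * sPow η t (Pform p w.2)) z
      = sPow (!ε) (s - 1) (Pform p z.1) * sPow (!η) (t - 1) (Pform p z.2)
        * (2 * sgn p i * (s * z.1 i * Pform p z.2 - t * z.2 i * Pform p z.1)) := by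
  rw [pdiff_fun_mul ((contDiffAt_sPow_pform_fst hz1).differentiableAt one_ne_zero)
      ((contDiffAt_sPow_pform_snd hz2).differentiableAt one_ne_zero),
    pdiff_sPow_pform_fst i hz1, pdiff_sPow_pform_snd i hz2,
    ← sPow_not_sub_one_mul_self ε s hz1, ← sPow_not_sub_one_mul_self η t hz2]
  ring

lemma sum_sgn_mul_pdiff_sPow_mul_pdiff_sPow (hz1 : Pform p z.1 ≠ 0) (hz2 : Pform p z.2 ≠ 0) :
    ∑ i, (sgn p i : ℂ) * (pdiff i (fun w ↦ sPow ε s (Pform p w.1)) z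
        * pdiff i (fun w ↦ sPow η t (Pform p w.2)) z)
      = sPow (!ε) (s - 1) (Pform p z.1) * sPow (!η) (t - 1) (Pform p z.2)
        * (-(4 * s * t) * Pbil p z.1 z.2) := by
  simp only [Pbil, Complex.ofReal_sum, Complex.ofReal_mul, Finset.mul_sum]
  refine Finset.sum_congr rfl fun i _ ↦ ?_
  rw [pdiff_sPow_pform_fst i hz1, pdiff_sPow_pform_snd i hz2]
  linear_combination -4 * s * t * sgn p i * z.1 i * z.2 i * sPow (!ε) (s - 1) (Pform p z.1)
    * sPow (!η) (t - 1) (Pform p z.2) * sgn_mul_self p i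

lemma popDiff_sPow_mul_sPow (hz1 : Pform p z.1 ≠ 0) (hz2 : Pform p z.2 ≠ 0) :
    PopDiff p (fun w ↦ sPow ε s (Pform p w.1) * sPow η t (Pform p w.2)) z
      = sPow (!ε) (s - 1) (Pform p z.1) * sPow (!η) (t - 1) (Pform p z.2)
        * (2 * t * (2 * t - 2 + n) * Pform p z.1 - 8 * s * t * Pbil p z.1 z.2
          + 2 * s * (2 * s - 2 + n) * Pform p z.2) := by
  rw [popDiff_fun_mul p (contDiffAt_sPow_pform_fst hz1) (contDiffAt_sPow_pform_snd hz2),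
    sum_sgn_mul_pdiff_sPow_mul_pdiff_sPow hz1 hz2, popDiff_sPow_pform_fst hz1,
    popDiff_sPow_pform_snd hz2, ← sPow_not_sub_one_mul_self ε s hz1,
    ← sPow_not_sub_one_mul_self η t hz2]
  ring

lemma sum_sgn_mul_pdiff_sPow_mul_sPow_mul_pdiff (f : (Fin n → ℝ) × (Fin n → ℝ) → ℂ)
    (hz1 : Pform p z.1 ≠ 0) (hz2 : Pform p z.2 ≠ 0) :
    ∑ i, (sgn p i : ℂ)
        * (pdiff i (fun w ↦ sPow ε s (Pform p w.1) * sPow η t (Pform p w.2)) z * pdiff i f z)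
      = sPow (!ε) (s - 1) (Pform p z.1) * sPow (!η) (t - 1) (Pform p z.2)
        * (2 * s * Pform p z.2 * ∑ j, (z.1 j : ℂ) * (pdx j f z - pdy j f z)
          + 2 * t * Pform p z.1 * ∑ j, (z.2 j : ℂ) * (pdy j f z - pdx j f z)) := by
  simp only [Finset.mul_sum, ← Finset.sum_add_distrib]
  refine Finset.sum_congr rfl fun i _ ↦ ?_
  rw [pdiff_sPow_mul_sPow i hz1 hz2, pdiff]
  linear_combination 2 * sPow (!ε) (s - 1) (Pform p z.1) * sPow (!η) (t - 1) (Pform p z.2)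
    * (s * z.1 i * Pform p z.2 - t * z.2 i * Pform p z.1) * (pdx i f z - pdy i f z)
    * sgn_mul_self p i

end PowersOfForms

theorem main_identity_Rpq_general (p : ℕ) {n : ℕ} (s t : ℂ) (ε η : Bool)
    {f : (Fin n → ℝ) × (Fin n → ℝ) → ℂ} {z : (Fin n → ℝ) × (Fin n → ℝ)}
    (hf : ContDiffAt ℝ 2 f z) (hz1 : Pform p z.1 ≠ 0) (hz2 : Pform p z.2 ≠ 0) :
    PopDiff p (fun w ↦ sPow ε s (Pform p w.1) * sPow η t (Pform p w.2) * f w) z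
      = sPow (!ε) (s - 1) (Pform p z.1) * sPow (!η) (t - 1) (Pform p z.2)
          * Dst p s t f z := by
  have hpowers := (contDiffAt_sPow_pform_fst (ε := ε) (s := s) (m := 2) hz1).mul
    (contDiffAt_sPow_pform_snd (ε := η) (s := t) hz2)
  rw [popDiff_fun_mul p hpowers hf, popDiff_sPow_mul_sPow hz1 hz2,
    sum_sgn_mul_pdiff_sPow_mul_sPow_mul_pdiff f hz1 hz2, Dst,
    ← sPow_not_sub_one_mul_self ε s hz1, ← sPow_not_sub_one_mul_self η t hz2]
  ring

/-- Main identity for `V = ℝ^{p,q}` with the explicit operator `D_{s,t}` (Theorem 8.2). -/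
theorem main_identity_Rpq (p q : ℕ) (hp : 1 ≤ p) (n : ℕ) (hn : n = p + q)
    (s t : ℂ) (ε η : Bool) (f : (Fin n → ℝ) × (Fin n → ℝ) → ℂ)
    (hf : ContDiff ℝ (⊤ : ℕ∞) f)
    (z : (Fin n → ℝ) × (Fin n → ℝ)) (hz1 : Pform p z.1 ≠ 0) (hz2 : Pform p z.2 ≠ 0) :
    PopDiff p (fun w => sPow ε s (Pform p w.1) * sPow η t (Pform p w.2) * f w) z
      = sPow (!ε) (s - 1) (Pform p z.1) * sPow (!η) (t - 1) (Pform p z.2)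
          * Dst p s t f z :=
  main_identity_Rpq_general p s t ε η (contDiff_infty.mp hf 2).contDiffAt hz1 hz2
end
end
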